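/- From two convex potentials to one: Let X = ∏_{i=1}^n [aᵢ, bᵢ] ⊂ ℝⁿ be a compact box with 0 ≤ aᵢ < bᵢ for each i, and let μ be a finite signed Borel measure on X with μ(X) = 0 and Jordan decomposition μ = μ₊ − μ₋. Then sup over pairs φ, ψ ∈ 𝒰(X) satisfying φ(x) − ψ(y) ≤ ‖x − y‖₁ for all x, y ∈ X of (∫_X φ dμ₊ − ∫_X ψ dμ₋) equals sup over u ∈ 𝒰(X) ∩ ℒ₁(X) of (∫_X u dμ₊ − ∫_X u dμ₋); moreover if the supremum of one side is achieved then so is the supremum of the other side. -/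

import Mathlib

open MeasureTheory Set

/-- ℓ¹ distance on `Fin n → ℝ`. -/
noncomputable def l1dist {n : ℕ} (x y : Fin n → ℝ) : ℝ := ∑ i, |x i - y i|

/-- The box `∏ i, [a i, b i]` in `ℝⁿ`. -/
def box {n : ℕ} (a b : Fin n → ℝ) : Set (Fin n → ℝ) := {x | ∀ i, x i ∈ Set.Icc (a i) (b i)}

/-- `u ∈ 𝒰(X)`: continuous, coordinatewise nondecreasing and convex on `X`. -/
def memU {n : ℕ} (X : Set (Fin n → ℝ)) (u : (Fin n → ℝ) → ℝ) : Prop :=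
  ContinuousOn u X ∧ (∀ x ∈ X, ∀ y ∈ X, (∀ i, x i ≤ y i) → u x ≤ u y) ∧ ConvexOn ℝ X u

/-- `u ∈ ℒ₁(X)`: 1-Lipschitz with respect to the ℓ¹ norm on `X`. -/
def memL1 {n : ℕ} (X : Set (Fin n → ℝ)) (u : (Fin n → ℝ) → ℝ) : Prop :=
  ∀ x ∈ X, ∀ y ∈ X, u x - u y ≤ l1dist x y

/-!
Given an admissible pair `(φ, ψ)`, the infimal convolution `u x = ⨅ y ∈ X, ψ y + ‖x - y‖₁` satisfies
`φ ≤ u ≤ ψ` on `X`, so replacing both potentials by `u` can only increase the objective. It lies in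
`𝒰(X) ∩ ℒ₁(X)`: it inherits the Lipschitz bound, hence continuity, from the norm; it is convex as a
partial minimum of a jointly convex function; and for `x ≤ y` any competitor `z` for `y` is beaten
at `x` by `x ⊓ z`, which lies below `z` and satisfies `‖x - x ⊓ z‖₁ ≤ ‖y - z‖₁`. Equality of the two
masses makes the objective invariant under adding constants to `u`, so on a compact `X` the
Lipschitz bound makes the supremum finite.
-/

section SSup

variable {α : Type*} [ConditionallyCompleteLinearOrder α] {s t : Set α}

theorem csSup_eq_csSup_of_subset_of_isCofinalFor (hts : t ⊆ s) (hst : IsCofinalFor s t) :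
    sSup s = sSup t :=
  csSup_eq_csSup_of_forall_exists_le (fun _ hx => hst hx) fun x hx => ⟨x, hts hx, le_rfl⟩

theorem csSup_mem_iff_of_subset_of_isCofinalFor (hts : t ⊆ s) (hst : IsCofinalFor s t)
    (ht : BddAbove t) : sSup s ∈ s ↔ sSup t ∈ t := by
  have heq : sSup s = sSup t := csSup_eq_csSup_of_subset_of_isCofinalFor hts hst
  refine ⟨fun hs => ?_, fun h => heq ▸ hts h⟩
  obtain ⟨r, hr, hle⟩ := hst hs
  rwa [le_antisymm (heq ▸ hle) (le_csSup ht hr)]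

end SSup

theorem infClosed_Icc {α : Type*} [SemilatticeInf α] {a b : α} : InfClosed (Icc a b) :=
  fun _ hx _ hy => ⟨le_inf hx.1 hy.1, inf_le_left.trans hx.2⟩

theorem convexOn_iInf_of_convexOn_prod {E F : Type*} [AddCommGroup E] [Module ℝ E]
    [AddCommGroup F] [Module ℝ F] {s : Set E} {t : Set F} {f : E × F → ℝ}
    (hf : ConvexOn ℝ (s ×ˢ t) f) (ht : t.Nonempty)
    (hbdd : ∀ x ∈ s, BddBelow (range fun y : t => f (x, y))) :
    ConvexOn ℝ s fun x => ⨅ y : t, f (x, y) := by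
  have : Nonempty t := ht.to_subtype
  have hs : Convex ℝ s := by
    simpa only [LinearMap.coe_fst, fst_image_prod s ht] using
      hf.1.linear_image (LinearMap.fst ℝ E F)
  refine ⟨hs, fun x hx y hy α β hα hβ hαβ => le_of_forall_pos_le_add fun ε hε => ?_⟩
  obtain ⟨z, hz⟩ := exists_lt_of_ciInf_lt (lt_add_of_pos_right (⨅ z : t, f (x, z)) hε)
  obtain ⟨w, hw⟩ := exists_lt_of_ciInf_lt (lt_add_of_pos_right (⨅ w : t, f (y, w)) hε)
  have hxz : (x, z.1) ∈ s ×ˢ t := ⟨hx, z.2⟩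
  have hyw : (y, w.1) ∈ s ×ˢ t := ⟨hy, w.2⟩
  have hmem := hf.1 hxz hyw hα hβ hαβ
  calc ⨅ v : t, f (α • x + β • y, v)
      ≤ f (α • (x, z.1) + β • (y, w.1)) := ciInf_le (hbdd _ hmem.1) ⟨_, hmem.2⟩
    _ ≤ α • f (x, z) + β • f (y, w) := hf.2 hxz hyw hα hβ hαβ
    _ ≤ α • ((⨅ v : t, f (x, v)) + ε) + β • ((⨅ v : t, f (y, v)) + ε) := by gcongr
    _ = α • (⨅ v : t, f (x, v)) + β • (⨅ v : t, f (y, v)) + ε := by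
      rw [smul_add, smul_add, add_add_add_comm, ← add_smul, hαβ, one_smul]

section Integral

variable {E : Type*} [TopologicalSpace E] [T2Space E] [MeasurableSpace E] [OpensMeasurableSpace E]
  {K : Set E} {μ : Measure E} [IsFiniteMeasureOnCompacts μ]

theorem integrable_of_continuousOn_of_measure_compl_eq_zero {F : Type*} [NormedAddCommGroup F]
    {f : E → F} (hK : IsCompact K) (hμ : μ Kᶜ = 0) (hf : ContinuousOn f K) : Integrable f μ := by
  have hint : IntegrableOn f K μ := hf.integrableOn_compact hK
  rwa [IntegrableOn, Measure.restrict_eq_self_of_ae_mem (mem_ae_iff.2 hμ)] at hint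

theorem integral_le_integral_of_le_on_compact {f g : E → ℝ} (hK : IsCompact K) (hμ : μ Kᶜ = 0)
    (hf : ContinuousOn f K) (hg : ContinuousOn g K) (hfg : ∀ x ∈ K, f x ≤ g x) :
    ∫ x, f x ∂μ ≤ ∫ x, g x ∂μ := by
  refine integral_mono_ae (integrable_of_continuousOn_of_measure_compl_eq_zero hK hμ hf)
    (integrable_of_continuousOn_of_measure_compl_eq_zero hK hμ hg) ?_
  filter_upwards [mem_ae_iff.2 hμ] with x hx using hfg x hx

end Integral

/-- The infimal convolution over `X` of `ψ` with a kernel `c`, the largest `u` with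
`u x - ψ y ≤ c x y` for all `x, y ∈ X`. The infimum is the junk value `0` at points `x` where
`fun y => ψ y + c x y` is unbounded below on `X`, and everywhere if `X` is empty. -/
noncomputable def infConv {E : Type*} (c : E → E → ℝ) (X : Set E) (ψ : E → ℝ) (x : E) : ℝ :=
  ⨅ y : X, (ψ y + c x y)

section InfConv

variable {E : Type*} {c : E → E → ℝ} {X : Set E} {φ ψ : E → ℝ} {x y : E}

theorem le_infConv (hX : X.Nonempty) (h : ∀ y ∈ X, φ x - ψ y ≤ c x y) :
    φ x ≤ infConv c X ψ x := by
  have : Nonempty X := hX.to_subtype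
  exact le_ciInf fun y => sub_le_iff_le_add'.1 (h y y.2)

theorem bddBelow_range_add_of_forall_sub_le (h : ∀ y ∈ X, φ x - ψ y ≤ c x y) :
    BddBelow (range fun y : X => ψ y + c x y) :=
  ⟨φ x, forall_mem_range.2 fun y => sub_le_iff_le_add'.1 (h y y.2)⟩

theorem infConv_le (hbdd : BddBelow (range fun y : X => ψ y + c x y)) (hy : y ∈ X) :
    infConv c X ψ x ≤ ψ y + c x y :=
  ciInf_le hbdd ⟨y, hy⟩

theorem infConv_sub_infConv_le (hX : X.Nonempty) (hc : ∀ z ∈ X, c x z ≤ c x y + c y z)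
    (hbdd : BddBelow (range fun z : X => ψ z + c x z)) :
    infConv c X ψ x - infConv c X ψ y ≤ c x y := by
  have : Nonempty X := hX.to_subtype
  refine sub_le_comm.1 (le_ciInf fun z => ?_)
  linarith [infConv_le hbdd z.2, hc z z.2]

theorem convexOn_infConv [AddCommGroup E] [Module ℝ E] (hX : X.Nonempty)
    (hψ : ConvexOn ℝ X ψ) (hc : ConvexOn ℝ (X ×ˢ X) fun p => c p.1 p.2)
    (hbdd : ∀ x ∈ X, BddBelow (range fun y : X => ψ y + c x y)) :
    ConvexOn ℝ X (infConv c X ψ) := by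
  have hψ_snd : ConvexOn ℝ (X ×ˢ X) fun p => ψ p.2 :=
    (hψ.comp_linearMap (LinearMap.snd ℝ E E)).subset (fun _ hp => hp.2) hc.1
  exact convexOn_iInf_of_convexOn_prod (hψ_snd.add hc) hX hbdd

theorem monotoneOn_infConv [SemilatticeInf E] (hX : InfClosed X) (hψ : MonotoneOn ψ X)
    (hc : ∀ x y z, x ≤ y → c x (x ⊓ z) ≤ c y z)
    (hbdd : ∀ x ∈ X, BddBelow (range fun y : X => ψ y + c x y)) :
    MonotoneOn (infConv c X ψ) X := by
  intro x hx y _ hxy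
  have : Nonempty X := ⟨⟨x, hx⟩⟩
  refine le_ciInf fun z => ?_
  have hxz : x ⊓ z ∈ X := hX hx z.2
  calc infConv c X ψ x ≤ ψ (x ⊓ z) + c x (x ⊓ z) := infConv_le (hbdd x hx) hxz
    _ ≤ ψ z + c y z := add_le_add (hψ hxz z.2 inf_le_right) (hc x y z hxy)

end InfConv

section L1

variable {n : ℕ}

theorem l1dist_eq_norm (x y : Fin n → ℝ) : l1dist x y = ‖WithLp.toLp 1 (x - y)‖ := by
  simp [l1dist, PiLp.norm_eq_of_L1]

theorem l1dist_self (x : Fin n → ℝ) : l1dist x x = 0 := by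
  simp [l1dist]

theorem l1dist_triangle (x y z : Fin n → ℝ) : l1dist x z ≤ l1dist x y + l1dist y z := by
  simpa only [l1dist_eq_norm, WithLp.toLp_sub] using norm_sub_le_norm_sub_add_norm_sub _ _ _

theorem continuous_l1dist : Continuous fun p : (Fin n → ℝ) × (Fin n → ℝ) => l1dist p.1 p.2 := by
  unfold l1dist
  fun_prop

theorem convexOn_l1dist :
    ConvexOn ℝ univ fun p : (Fin n → ℝ) × (Fin n → ℝ) => l1dist p.1 p.2 := by
  simp only [l1dist_eq_norm]
  exact convexOn_univ_norm.comp_linearMap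
    ((WithLp.linearEquiv 1 ℝ (Fin n → ℝ)).symm.toLinearMap ∘ₗ
      (LinearMap.fst ℝ (Fin n → ℝ) (Fin n → ℝ) - LinearMap.snd ℝ (Fin n → ℝ) (Fin n → ℝ)))

theorem l1dist_le_mul_dist (x y : Fin n → ℝ) : l1dist x y ≤ n * dist x y := by
  simpa [l1dist, Real.dist_eq] using
    Finset.sum_le_card_nsmul Finset.univ _ _ fun i _ => dist_le_pi_dist x y i

theorem l1dist_inf_le_of_le {x y : Fin n → ℝ} (z : Fin n → ℝ) (hxy : x ≤ y) :
    l1dist x (x ⊓ z) ≤ l1dist y z := by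
  refine Finset.sum_le_sum fun i _ => ?_
  change |x i - x i ⊓ z i| ≤ |y i - z i|
  rw [abs_of_nonneg (sub_nonneg.2 inf_le_left), sub_le_comm]
  refine le_inf (sub_le_self _ (abs_nonneg _)) ?_
  linarith [hxy i, le_abs_self (y i - z i)]

theorem memL1.continuousOn {X : Set (Fin n → ℝ)} {u : (Fin n → ℝ) → ℝ} (hu : memL1 X u) :
    ContinuousOn u X := by
  refine (LipschitzOnWith.of_le_add_mul n fun x hx y hy => ?_).continuousOn
  exact sub_le_iff_le_add'.1 ((hu x hx y hy).trans (l1dist_le_mul_dist x y))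

theorem box_eq_Icc (a b : Fin n → ℝ) : box a b = Icc a b := by
  ext x
  simp only [box, mem_ofPred_eq, mem_Icc, Pi.le_def, forall_and]

end L1

section Potentials

variable {n : ℕ} {X : Set (Fin n → ℝ)} {φ ψ u : (Fin n → ℝ) → ℝ} {μ ν : Measure (Fin n → ℝ)}

theorem memL1_infConv (hbdd : ∀ x ∈ X, BddBelow (range fun y : X => ψ y + l1dist x y)) :
    memL1 X (infConv l1dist X ψ) :=
  fun x hx y _ => infConv_sub_infConv_le ⟨x, hx⟩ (fun z _ => l1dist_triangle x y z) (hbdd x hx)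

theorem memU_infConv (hX : InfClosed X) (hne : X.Nonempty) (hψ : memU X ψ)
    (hbdd : ∀ x ∈ X, BddBelow (range fun y : X => ψ y + l1dist x y)) :
    memU X (infConv l1dist X ψ) := by
  obtain ⟨-, hmono, hconv⟩ := hψ
  have hu : MonotoneOn (infConv l1dist X ψ) X :=
    monotoneOn_infConv hX (fun x hx y hy => hmono x hx y hy)
      (fun _ _ z => l1dist_inf_le_of_le z) hbdd
  exact ⟨(memL1_infConv hbdd).continuousOn, fun x hx y hy => hu hx hy,
    convexOn_infConv hne hconv (convexOn_l1dist.subset (subset_univ _) (hconv.1.prod hconv.1)) hbdd⟩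

/-- The values of the two-potential problem for `μ₊ = μ` and `μ₋ = ν`. -/
def pairValues (X : Set (Fin n → ℝ)) (μ ν : Measure (Fin n → ℝ)) : Set ℝ :=
  {r | ∃ φ ψ : (Fin n → ℝ) → ℝ, memU X φ ∧ memU X ψ ∧
    (∀ x ∈ X, ∀ y ∈ X, φ x - ψ y ≤ l1dist x y) ∧ r = (∫ x, φ x ∂μ) - (∫ x, ψ x ∂ν)}

/-- The values of the one-potential problem for `μ₊ = μ` and `μ₋ = ν`. -/
def potentialValues (X : Set (Fin n → ℝ)) (μ ν : Measure (Fin n → ℝ)) : Set ℝ :=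
  {r | ∃ u : (Fin n → ℝ) → ℝ, memU X u ∧ memL1 X u ∧ r = (∫ x, u x ∂μ) - (∫ x, u x ∂ν)}

theorem potentialValues_subset_pairValues : potentialValues X μ ν ⊆ pairValues X μ ν := by
  rintro _ ⟨u, hu, hL, rfl⟩
  exact ⟨u, u, hu, hu, hL, rfl⟩

theorem potentialValues_nonempty (hX : Convex ℝ X) : (potentialValues X μ ν).Nonempty := by
  have hU : memU X 0 := ⟨continuousOn_const, fun _ _ _ _ _ => le_rfl, convexOn_const 0 hX⟩
  have hL : memL1 X 0 := fun x _ y _ => by simp [l1dist_eq_norm]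
  exact ⟨_, 0, hU, hL, rfl⟩

theorem isCofinalFor_pairValues_potentialValues [IsFiniteMeasureOnCompacts μ]
    [IsFiniteMeasureOnCompacts ν] (hK : IsCompact X) (hinf : InfClosed X) (hne : X.Nonempty)
    (hμ : μ Xᶜ = 0) (hν : ν Xᶜ = 0) :
    IsCofinalFor (pairValues X μ ν) (potentialValues X μ ν) := by
  rintro _ ⟨φ, ψ, hφ, hψ, h, rfl⟩
  have hbdd (x) (hx : x ∈ X) := bddBelow_range_add_of_forall_sub_le (h x hx)
  have hu : memU X (infConv l1dist X ψ) := memU_infConv hinf hne hψ hbdd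
  have hφu : ∀ x ∈ X, φ x ≤ infConv l1dist X ψ x := fun x hx => le_infConv hne (h x hx)
  have huψ : ∀ x ∈ X, infConv l1dist X ψ x ≤ ψ x := fun x hx => by
    simpa only [l1dist_self, add_zero] using infConv_le (hbdd x hx) hx
  exact ⟨_, ⟨infConv l1dist X ψ, hu, memL1_infConv hbdd, rfl⟩,
    sub_le_sub (integral_le_integral_of_le_on_compact hK hμ hφ.1 hu.1 hφu)
      (integral_le_integral_of_le_on_compact hK hν hu.1 hψ.1 huψ)⟩

variable [IsFiniteMeasure μ] [IsFiniteMeasure ν]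

theorem integral_sub_integral_le_of_memL1 (hK : IsCompact X) (hμ : μ Xᶜ = 0) (hν : ν Xᶜ = 0)
    (hmass : μ univ = ν univ) (hu : memL1 X u) {z : Fin n → ℝ} (hz : z ∈ X) :
    (∫ x, u x ∂μ) - (∫ x, u x ∂ν) ≤ (∫ x, l1dist x z ∂μ) + (∫ x, l1dist z x ∂ν) := by
  have hleft : Continuous fun x => l1dist x z := continuous_l1dist.comp (.prodMk_left z)
  have hright : Continuous fun x => l1dist z x := continuous_l1dist.comp (.prodMk_right z)
  have hupper : ∫ x, u x ∂μ ≤ μ.real univ * u z + ∫ x, l1dist x z ∂μ := by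
    calc ∫ x, u x ∂μ ≤ ∫ x, (u z + l1dist x z) ∂μ :=
          integral_le_integral_of_le_on_compact hK hμ hu.continuousOn (by fun_prop)
            fun x hx => sub_le_iff_le_add'.1 (hu x hx z hz)
      _ = μ.real univ * u z + ∫ x, l1dist x z ∂μ := by
        rw [integral_add (integrable_const _)
          (integrable_of_continuousOn_of_measure_compl_eq_zero hK hμ hleft.continuousOn),
          integral_const, smul_eq_mul]
  have hlower : ν.real univ * u z - ∫ x, l1dist z x ∂ν ≤ ∫ x, u x ∂ν := by
    calc ν.real univ * u z - ∫ x, l1dist z x ∂ν = ∫ x, (u z - l1dist z x) ∂ν := by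
          rw [integral_sub (integrable_const _)
            (integrable_of_continuousOn_of_measure_compl_eq_zero hK hν hright.continuousOn),
            integral_const, smul_eq_mul]
      _ ≤ ∫ x, u x ∂ν :=
        integral_le_integral_of_le_on_compact hK hν (by fun_prop) hu.continuousOn
          fun x hx => sub_le_comm.1 (hu z hz x hx)
  have hreal : μ.real univ = ν.real univ := congrArg ENNReal.toReal hmass
  rw [hreal] at hupper
  linarith

theorem bddAbove_potentialValues (hK : IsCompact X) (hne : X.Nonempty) (hμ : μ Xᶜ = 0)
    (hν : ν Xᶜ = 0) (hmass : μ univ = ν univ) : BddAbove (potentialValues X μ ν) := by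
  obtain ⟨z, hz⟩ := hne
  refine ⟨(∫ x, l1dist x z ∂μ) + (∫ x, l1dist z x ∂ν), ?_⟩
  rintro _ ⟨u, -, hu, rfl⟩
  exact integral_sub_integral_le_of_memL1 hK hμ hν hmass hu hz

theorem two_potentials_to_one_general (hconv : Convex ℝ X) (hK : IsCompact X)
    (hinf : InfClosed X) (hne : X.Nonempty) (hμ : μ Xᶜ = 0) (hν : ν Xᶜ = 0)
    (hmass : μ univ = ν univ) :
    (potentialValues X μ ν).Nonempty ∧ BddAbove (pairValues X μ ν) ∧
      sSup (pairValues X μ ν) = sSup (potentialValues X μ ν) ∧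
      (sSup (pairValues X μ ν) ∈ pairValues X μ ν ↔
        sSup (potentialValues X μ ν) ∈ potentialValues X μ ν) := by
  have hsub : potentialValues X μ ν ⊆ pairValues X μ ν := potentialValues_subset_pairValues
  have hcof : IsCofinalFor (pairValues X μ ν) (potentialValues X μ ν) :=
    isCofinalFor_pairValues_potentialValues hK hinf hne hμ hν
  have hbdd : BddAbove (potentialValues X μ ν) :=
    bddAbove_potentialValues hK hne hμ hν hmass
  have hbdd_pair : BddAbove (pairValues X μ ν) :=
    Nonempty.mono (upperBounds_mono_of_isCofinalFor hcof) hbdd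
  exact ⟨potentialValues_nonempty hconv, hbdd_pair,
    csSup_eq_csSup_of_subset_of_isCofinalFor hsub hcof,
    csSup_mem_iff_of_subset_of_isCofinalFor hsub hcof hbdd⟩

end Potentials

/-- **From two convex potentials to one.** For the box `X` and a finite signed Borel measure
`μ` on `X` with `μ(X) = 0` and Jordan decomposition `μ = μp − μn`, the supremum of
`∫ φ dμ₊ − ∫ ψ dμ₋` over pairs `φ, ψ ∈ 𝒰(X)` with `φ(x) − ψ(y) ≤ ‖x − y‖₁` equals the
supremum of `∫ u dμ₊ − ∫ u dμ₋` over `u ∈ 𝒰(X) ∩ ℒ₁(X)`; and one supremum is achieved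
iff the other is. -/
theorem two_potentials_to_one {n : ℕ} (a b : Fin n → ℝ) (hab : ∀ i, 0 ≤ a i ∧ a i < b i)
    (μp μn : Measure (Fin n → ℝ)) [IsFiniteMeasure μp] [IsFiniteMeasure μn]
    (hμp : μp (box a b)ᶜ = 0) (hμn : μn (box a b)ᶜ = 0) (hjordan : μp.MutuallySingular μn)
    (hzero : μp Set.univ = μn Set.univ) :
    let X : Set (Fin n → ℝ) := box a b
    let P2 : Set ℝ := {r | ∃ φ ψ : (Fin n → ℝ) → ℝ, memU X φ ∧ memU X ψ ∧
        (∀ x ∈ X, ∀ y ∈ X, φ x - ψ y ≤ l1dist x y) ∧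
        r = (∫ x, φ x ∂μp) - (∫ x, ψ x ∂μn)}
    let P1 : Set ℝ := {r | ∃ u : (Fin n → ℝ) → ℝ, memU X u ∧ memL1 X u ∧
        r = (∫ x, u x ∂μp) - (∫ x, u x ∂μn)}
    sSup P2 = sSup P1 ∧ (sSup P2 ∈ P2 ↔ sSup P1 ∈ P1) := by
  have hX : box a b = Icc a b := box_eq_Icc a b
  exact (two_potentials_to_one_general (hX ▸ convex_Icc a b) (hX ▸ isCompact_Icc)
    (hX ▸ infClosed_Icc) ⟨a, fun i => ⟨le_rfl, (hab i).2.le⟩⟩ hμp hμn hzero).2.2
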